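/- arXiv:2507.11672 — 2 statements merged into one kernel-verified Lean document; each statement's English description precedes it below -/
import Mathlib

section
/- There exists a nonempty finite set S of integers, each at least 2, such that lcm(S) has exactly two distinct prime factors and MIN(S) < FIB(S). -/
open Polynomial

/-- The mask polynomial of a finite set of natural numbers: `A(X) = ∑_{a ∈ A} X^a`. -/
noncomputable def maskPoly (A : Finset ℕ) : Polynomial ℤ := ∑ a ∈ A, X ^ a

/-- The fiber polynomial `F^N_p(X) = 1 + X^{N/p} + ⋯ + X^{(p-1)N/p}`. -/
noncomputable def fiberPoly (N p : ℕ) : Polynomial ℤ :=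
  ∑ j ∈ Finset.range p, X ^ (j * (N / p))

/-- A finite set `A ⊆ ℕ` is fibered on scale `N` if some prime `p ∣ N` has
`F^N_p(X) ∣ A(X)`. -/
def IsFibered (A : Finset ℕ) (N : ℕ) : Prop :=
  ∃ p : ℕ, p.Prime ∧ p ∣ N ∧ fiberPoly N p ∣ maskPoly A

/-- `MIN(S)`: the minimal size of a nonempty finite `A ⊆ ℕ` with `Φ_s ∣ A(X)` for all `s ∈ S`. -/
noncomputable def MINs (S : Finset ℕ) : ℕ :=
  sInf {k | ∃ A : Finset ℕ, A.Nonempty ∧ A.card = k ∧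
    ∀ s ∈ S, cyclotomic s ℤ ∣ maskPoly A}

/-- `FIB(S)`: the minimal size of a nonempty finite `A ⊆ ℕ` fibered on each scale `s ∈ S`. -/
noncomputable def FIBs (S : Finset ℕ) : ℕ :=
  sInf {k | ∃ A : Finset ℕ, A.Nonempty ∧ A.card = k ∧ ∀ s ∈ S, IsFibered A s}

/-!
For distinct primes `p` and `q`, take the scales `pq`, `p², …, p^(q+1)` and `q², …, q^(p+1)`.
Evaluating the prime power cyclotomic factors at `1` shows that `p^q q^p` divides `#A`. A set
fibered on the scale `pq` has `Φ_p` or `Φ_q` as a further factor, which costs an extra factor `p`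
or `q` in `#A`. Divisibility by `Φ_{pq}` alone is cheaper: the numbers of elements in the residue
classes modulo `pq`, arranged as a `p × q` matrix, need only have the form `f x + g y`, and `f`
and `g` may both be non-constant. By Fermat's little theorem such a matrix with total
`p^q q^p` can have all row sums divisible by `p^q` and all column sums divisible by `q^p`; spreading
each class modulo `p` or `q` evenly over the classes above it modulo `p^(q+1)` or `q^(p+1)` then
meets every scale.
-/

open Finset

/-! ### Divisibility by cyclotomic polynomials -/

lemma fiberPoly_mul_left_eq_sum_fin {d k : ℕ} (hk : 0 < k) :
    fiberPoly (d * k) k = ∑ j : Fin k, X ^ (d * j : ℕ) := by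
  simp only [fiberPoly, sum_range, Nat.mul_div_cancel _ hk, mul_comm]

lemma fiberPoly_mul_X_pow_sub_one {N k : ℕ} (hk : k ∣ N) :
    fiberPoly N k * (X ^ (N / k) - 1) = X ^ N - 1 := by
  simp only [fiberPoly, mul_comm _ (N / k), pow_mul, geom_sum_mul]
  rw [← pow_mul, Nat.div_mul_cancel hk]

lemma fiberPoly_eq_prod_cyclotomic {N k : ℕ} (hN : N ≠ 0) (hk : k ∣ N) :
    fiberPoly N k = ∏ d ∈ N.divisors \ (N / k).divisors, cyclotomic d ℤ := by
  have hNk : 0 < N / k :=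
    Nat.div_pos (Nat.le_of_dvd hN.bot_lt hk) (Nat.pos_of_dvd_of_pos hk hN.bot_lt)
  refine mul_right_cancel₀ (X_pow_sub_C_ne_zero hNk (1 : ℤ)) ?_
  rw [C_1, fiberPoly_mul_X_pow_sub_one hk, ← prod_cyclotomic_eq_X_pow_sub_one hNk,
    prod_sdiff (Nat.divisors_subset_of_dvd hN (Nat.div_dvd_of_dvd hk)),
    prod_cyclotomic_eq_X_pow_sub_one hN.bot_lt]

lemma cyclotomic_dvd_fiberPoly {N k d : ℕ} (hN : N ≠ 0) (hk : k ∣ N) (hd : d ∣ N)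
    (hdk : ¬ d ∣ N / k) : cyclotomic d ℤ ∣ fiberPoly N k := by
  rw [fiberPoly_eq_prod_cyclotomic hN hk]
  exact dvd_prod_of_mem _ (by simp [hN, hd, hdk])

lemma not_dvd_div_self {N k : ℕ} (hN : N ≠ 0) (hk : 1 < k) (hkN : k ∣ N) : ¬ N ∣ N / k :=
  Nat.not_dvd_of_pos_of_lt (Nat.div_pos (Nat.le_of_dvd hN.bot_lt hkN) (zero_lt_one.trans hk))
    (Nat.div_lt_self hN.bot_lt hk)

lemma X_pow_sub_one_dvd_X_pow_sub_X_pow {a b n : ℕ} (h : a ≡ b [MOD n]) :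
    (X ^ n - 1 : ℤ[X]) ∣ X ^ a - X ^ b := by
  wlog hab : a ≤ b generalizing a b
  · rw [dvd_sub_comm]
    exact this h.symm (le_of_not_ge hab)
  obtain ⟨c, rfl⟩ := Nat.exists_eq_add_of_le hab
  have hc : n ∣ c := by simpa using (Nat.modEq_iff_dvd' hab).1 h
  rw [show (X ^ a - X ^ (a + c) : ℤ[X]) = -X ^ a * (X ^ c - 1) by ring]
  exact (dvd_pow_sub_one_of_dvd hc).mul_left _

lemma cyclotomic_dvd_sum_X_pow_congr {ι : Type*} {I : Finset ι} {a b : ι → ℕ} {s : ℕ}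
    (h : ∀ i ∈ I, a i ≡ b i [MOD s]) :
    cyclotomic s ℤ ∣ ∑ i ∈ I, X ^ a i ↔ cyclotomic s ℤ ∣ ∑ i ∈ I, X ^ b i := by
  refine dvd_iff_dvd_of_dvd_sub ?_
  rw [← sum_sub_distrib]
  exact dvd_sum fun i hi ↦
    (cyclotomic.dvd_X_pow_sub_one s ℤ).trans (X_pow_sub_one_dvd_X_pow_sub_X_pow (h i hi))

lemma isRelPrime_cyclotomic {m n : ℕ} (hm : 0 < m) (hn : 0 < n) (hmn : m ≠ n) :
    IsRelPrime (cyclotomic m ℤ) (cyclotomic n ℤ) := by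
  refine (cyclotomic.irreducible hm).isRelPrime_iff_not_dvd.2 fun h ↦ hmn ?_
  have := (cyclotomic.irreducible hm).associated_of_dvd (cyclotomic.irreducible hn) h
  exact cyclotomic_injective
    (eq_of_monic_of_associated (cyclotomic.monic m ℤ) (cyclotomic.monic n ℤ) this)

/-! ### Fibered sets -/

lemma eval_one_maskPoly (A : Finset ℕ) : (maskPoly A).eval 1 = #A := by
  simp [maskPoly, eval_finsetSum]

lemma pow_card_dvd_card_of_cyclotomic_dvd {A T : Finset ℕ} {p : ℕ} (hp : p.Prime)
    (h : ∀ j ∈ T, cyclotomic (p ^ (j + 1)) ℤ ∣ maskPoly A) : p ^ #T ∣ #A := by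
  have := Fact.mk hp
  have hdvd : ∏ j ∈ T, cyclotomic (p ^ (j + 1)) ℤ ∣ maskPoly A := by
    refine prod_dvd_of_isRelPrime (fun i _ j _ hij ↦ ?_) h
    exact isRelPrime_cyclotomic (pow_pos hp.pos _) (pow_pos hp.pos _) fun he ↦
      hij (Nat.succ_injective (Nat.pow_right_injective hp.two_le he))
  have heval := eval_dvd (x := 1) hdvd
  simp only [eval_prod, eval_one_cyclotomic_prime_pow, prod_const, eval_one_maskPoly] at heval
  exact_mod_cast heval

lemma pow_succ_dvd_card_of_cyclotomic_dvd {A : Finset ℕ} {p m : ℕ} (hp : p.Prime)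
    (h₁ : cyclotomic p ℤ ∣ maskPoly A)
    (h : ∀ j ∈ Icc 1 m, cyclotomic (p ^ (j + 1)) ℤ ∣ maskPoly A) : p ^ (m + 1) ∣ #A := by
  have hinsert : ∀ j ∈ insert 0 (Icc 1 m), cyclotomic (p ^ (j + 1)) ℤ ∣ maskPoly A :=
    (forall_mem_insert _ _ _).2 ⟨by rwa [zero_add, pow_one], h⟩
  simpa using pow_card_dvd_card_of_cyclotomic_dvd hp hinsert

lemma IsFibered.cyclotomic_dvd {A : Finset ℕ} {N : ℕ} (hN : N ≠ 0) (h : IsFibered A N) :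
    cyclotomic N ℤ ∣ maskPoly A := by
  obtain ⟨p, hp, hpN, hA⟩ := h
  exact (cyclotomic_dvd_fiberPoly hN hpN dvd_rfl (not_dvd_div_self hN hp.one_lt hpN)).trans hA

lemma IsFibered.cyclotomic_dvd_of_mul {A : Finset ℕ} {p q : ℕ} (hp : p.Prime) (hq : q.Prime)
    (hpq : p ≠ q) (h : IsFibered A (p * q)) :
    cyclotomic p ℤ ∣ maskPoly A ∨ cyclotomic q ℤ ∣ maskPoly A := by
  have hN : p * q ≠ 0 := mul_ne_zero hp.ne_zero hq.ne_zero
  obtain ⟨r, hr, hrN, hA⟩ := h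
  rcases hr.dvd_mul.1 hrN with hrp | hrq
  · obtain rfl := (Nat.prime_dvd_prime_iff_eq hr hp).1 hrp
    refine .inl <| (cyclotomic_dvd_fiberPoly hN hrN hrN ?_).trans hA
    rwa [Nat.mul_div_cancel_left _ hr.pos, Nat.prime_dvd_prime_iff_eq hr hq]
  · obtain rfl := (Nat.prime_dvd_prime_iff_eq hr hq).1 hrq
    refine .inr <| (cyclotomic_dvd_fiberPoly hN hrN hrN ?_).trans hA
    rwa [Nat.mul_div_cancel _ hr.pos, Nat.prime_dvd_prime_iff_eq hr hp, eq_comm]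

lemma isFibered_range {M N : ℕ} (hM : M ≠ 0) (hNM : N ∣ M) (hN : N ≠ 1) :
    IsFibered (range M) N := by
  have hN0 : N ≠ 0 := ne_zero_of_dvd_ne_zero hM hNM
  have hmask : maskPoly (range M) = fiberPoly M M := by
    simp [maskPoly, fiberPoly, Nat.div_self hM.bot_lt]
  refine ⟨N.minFac, N.minFac_prime hN, N.minFac_dvd, ?_⟩
  rw [hmask, fiberPoly_eq_prod_cyclotomic hM dvd_rfl,
    fiberPoly_eq_prod_cyclotomic hN0 N.minFac_dvd]
  refine prod_dvd_prod_of_subset _ _ _ fun d hd ↦ ?_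
  simp only [mem_sdiff, Nat.mem_divisors] at hd ⊢
  refine ⟨⟨hd.1.1.trans hNM, hM⟩, fun h ↦ hd.2 ⟨?_, ?_⟩⟩
  · rw [Nat.div_self hM.bot_lt] at h
    exact h.1.trans (one_dvd _)
  · exact (Nat.div_pos (Nat.minFac_le hN0.bot_lt) N.minFac_pos).ne'

lemma exists_card_eq_FIBs {S : Finset ℕ} (hS : ∀ s ∈ S, 2 ≤ s) :
    ∃ A : Finset ℕ, A.Nonempty ∧ #A = FIBs S ∧ ∀ s ∈ S, IsFibered A s := by
  have hlcm : S.lcm id ≠ 0 := lcm_ne_zero_iff.2 fun s hs ↦ (zero_lt_two.trans_le (hS s hs)).ne'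
  have hne : {k | ∃ A : Finset ℕ, A.Nonempty ∧ #A = k ∧ ∀ s ∈ S, IsFibered A s}.Nonempty :=
    ⟨_, range (S.lcm id), nonempty_range_iff.2 hlcm, rfl, fun s hs ↦
      isFibered_range hlcm (dvd_lcm hs) (one_lt_two.trans_le (hS s hs)).ne'⟩
  exact Nat.sInf_mem hne

/-! ### Families of exponents with prescribed residues -/

-- Distinct multiples of `lcm(S)` added to the exponents make them distinct.
lemma MINs_le_card {ι : Type*} [Fintype ι] [Nonempty ι] {S : Finset ℕ} (hS : ∀ s ∈ S, s ≠ 0)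
    {a : ι → ℕ} (h : ∀ s ∈ S, cyclotomic s ℤ ∣ ∑ i, X ^ a i) :
    MINs S ≤ Fintype.card ι := by
  set N := S.lcm id
  have hN : 0 < N := (lcm_ne_zero_iff.2 hS).bot_lt
  let b : ι → ℕ := fun i ↦ a i % N + N * Fintype.equivFin ι i
  have hb : Function.Injective b := fun i j hij ↦ by
    have := congrArg (· / N) hij
    simpa [b, Nat.add_mul_div_left _ _ hN, Nat.div_eq_of_lt (Nat.mod_lt _ hN), Fin.val_inj]
      using this
  refine Nat.sInf_le ⟨univ.map ⟨b, hb⟩, univ_nonempty.map, card_map _, fun s hs ↦ ?_⟩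
  have hba : ∀ i ∈ univ, b i ≡ a i [MOD s] := fun i _ ↦ by
    refine Nat.ModEq.of_dvd (dvd_lcm hs : s ∣ N) ?_
    simp [b, N, Nat.ModEq]
  simpa [maskPoly] using (cyclotomic_dvd_sum_X_pow_congr hba).2 (h s hs)

lemma exists_equidistributed_label {ι κ : Type*} [Fintype ι] [DecidableEq κ] (f : ι → κ) {k : ℕ}
    (h : ∀ x, k ∣ #{i | f i = x}) :
    ∃ u : ι → Fin k, ∀ x j, #{i | f i = x ∧ u i = j} = #{i | f i = x} / k := by
  let c (x : κ) := #{i | f i = x} / k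
  have e (x : κ) : {i // f i = x} ≃ Fin (c x) × Fin k :=
    Fintype.equivOfCardEq (by simp [c, Fintype.card_subtype, Nat.div_mul_cancel (h x)])
  let u (i : ι) : Fin k := (e (f i) ⟨i, rfl⟩).2
  refine ⟨u, fun x j ↦ ?_⟩
  let g (t : Fin (c x)) : ι := (e x).symm (t, j)
  have hg : Function.Injective g := fun t t' htt' ↦ by
    simpa using (e x).symm.injective (Subtype.ext htt')
  have hrange : ({i | f i = x ∧ u i = j} : Finset ι) = univ.map ⟨g, hg⟩ := by
    ext i
    simp only [mem_filter, mem_univ, true_and, mem_map, Function.Embedding.coeFn_mk]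
    constructor
    · rintro ⟨rfl, rfl⟩
      exact ⟨(e (f i) ⟨i, rfl⟩).1, congrArg Subtype.val ((e (f i)).symm_apply_apply ⟨i, rfl⟩)⟩
    · rintro ⟨t, rfl⟩
      have hgx : f (g t) = x := ((e x).symm (t, j)).2
      have hval : ∀ y (hy : f (g t) = y), (e y ⟨g t, hy⟩).2 = u (g t) := by
        rintro _ rfl
        rfl
      refine ⟨hgx, ?_⟩
      rw [← hval x hgx]
      simp [g]
  rw [hrange, card_map, card_univ, Fintype.card_fin]

-- Shifting each exponent by a suitable multiple of `d * L` spreads every class modulo `d` evenly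
-- over the `k` classes modulo `d * k` above it, and `fiberPoly (d * k) k` is the mask of those.
lemma exists_equidistributed_lift {ι : Type*} [Fintype ι] (a : ι → ℕ) {d k L : ℕ}
    (hk : 0 < k) (hLk : L.Coprime k) (h : ∀ r, k ∣ #{i | a i % d = r}) :
    ∃ b : ι → ℕ, (∀ i, b i ≡ a i [MOD d * L]) ∧
      ∀ s, s ∣ d * k → ¬ s ∣ d → cyclotomic s ℤ ∣ ∑ i, X ^ b i := by
  obtain ⟨u, hu⟩ := exists_equidistributed_label (fun i ↦ a i % d) h
  let w (i : ι) := Nat.chineseRemainder hLk (a i / d) (u i)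
  refine ⟨fun i ↦ a i % d + d * w i, fun i ↦ ?_, fun s hs hsd ↦ ?_⟩
  · conv_rhs => rw [← Nat.mod_add_div (a i) d]
    exact ((w i).2.1.mul_left' d).add_left _
  have hw : ∀ i ∈ univ, a i % d + d * w i ≡ a i % d + d * u i [MOD s] := fun i _ ↦
    (((w i).2.2.mul_left' d).add_left _).of_dvd hs
  refine (cyclotomic_dvd_sum_X_pow_congr hw).2 ?_
  have hd : d ≠ 0 := fun hd ↦ hsd (hd ▸ dvd_zero s)
  have hfiber : cyclotomic s ℤ ∣ ∑ j : Fin k, X ^ (d * j : ℕ) := by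
    rw [← fiberPoly_mul_left_eq_sum_fin hk]
    exact cyclotomic_dvd_fiberPoly (mul_ne_zero hd hk.ne') (dvd_mul_left k d) hs
      (by rwa [Nat.mul_div_cancel _ hk])
  rw [← sum_fiberwise_of_maps_to (t := univ.image (a · % d)) fun i hi ↦ mem_image_of_mem _ hi]
  refine dvd_sum fun r _ ↦ ?_
  have hclass : ∑ i with a i % d = r, X ^ (a i % d + d * u i) =
      X ^ r * (#{i | a i % d = r} / k) • ∑ j : Fin k, (X : ℤ[X]) ^ (d * j : ℕ) := by
    rw [← sum_fiberwise _ u, smul_sum, mul_sum]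
    refine sum_congr rfl fun j _ ↦ ?_
    rw [filter_filter, ← hu r j, ← sum_const, mul_sum]
    refine sum_congr rfl fun i hi ↦ ?_
    obtain ⟨rfl, rfl⟩ := (mem_filter.1 hi).2
    exact pow_add _ _ _
  rw [hclass]
  exact (dvd_smul_of_dvd _ hfiber).mul_left _

/-! ### Two primes -/

/-- The scales `p², …, p^(m+1)`, `q², …, q^(n+1)` and `pq`. The prime powers force `p ^ m * q ^ n`
to divide the cardinality, and `pq` is the scale at which being fibered is stronger than
`Φ_{pq} ∣ A`. -/
def biprimeScales (p q m n : ℕ) : Finset ℕ :=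
  insert (p * q) ((Icc 1 m).image (fun j ↦ p ^ (j + 1)) ∪ (Icc 1 n).image (fun j ↦ q ^ (j + 1)))

lemma forall_mem_biprimeScales {p q m n : ℕ} {P : ℕ → Prop} :
    (∀ s ∈ biprimeScales p q m n, P s) ↔
      P (p * q) ∧ (∀ j ∈ Icc 1 m, P (p ^ (j + 1))) ∧ ∀ j ∈ Icc 1 n, P (q ^ (j + 1)) := by
  simp only [biprimeScales, forall_mem_insert, forall_mem_union, forall_mem_image]

section TwoPrimes

variable {p q m n : ℕ}

lemma two_le_of_mem_biprimeScales (hp : 2 ≤ p) (hq : 2 ≤ q) :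
    ∀ s ∈ biprimeScales p q m n, 2 ≤ s := by
  refine forall_mem_biprimeScales.2 ⟨?_, fun j _ ↦ ?_, fun j _ ↦ ?_⟩
  · exact hp.trans (Nat.le_mul_of_pos_right p (zero_lt_two.trans_le hq))
  · exact hp.trans (Nat.le_self_pow j.succ_ne_zero p)
  · exact hq.trans (Nat.le_self_pow j.succ_ne_zero q)

lemma primeFactors_lcm_biprimeScales (hp : p.Prime) (hq : q.Prime) :
    ((biprimeScales p q m n).lcm id).primeFactors = {p, q} := by
  have hsupp : ∀ {i j : ℕ}, i ≠ 0 → j ≠ 0 → (p ^ i * q ^ j).primeFactors = {p, q} := by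
    intro i j hi hj
    rw [Nat.primeFactors_mul (pow_ne_zero _ hp.ne_zero) (pow_ne_zero _ hq.ne_zero),
      Nat.primeFactors_prime_pow hi hp, Nat.primeFactors_prime_pow hj hq, ← insert_eq]
  have hlower : p ^ 1 * q ^ 1 ∣ (biprimeScales p q m n).lcm id := by
    rw [pow_one, pow_one]
    exact dvd_lcm (f := id) (mem_insert_self _ _)
  have hupper : (biprimeScales p q m n).lcm id ∣ p ^ (m + 1) * q ^ (n + 1) := by
    refine lcm_dvd (forall_mem_biprimeScales.2 ⟨?_, fun j hj ↦ ?_, fun j hj ↦ ?_⟩)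
    · exact mul_dvd_mul (dvd_pow_self p m.succ_ne_zero) (dvd_pow_self q n.succ_ne_zero)
    · exact (pow_dvd_pow p (by simpa using (mem_Icc.1 hj).2)).mul_right _
    · exact (pow_dvd_pow q (by simpa using (mem_Icc.1 hj).2)).mul_left _
  have hbound : p ^ (m + 1) * q ^ (n + 1) ≠ 0 :=
    mul_ne_zero (pow_ne_zero _ hp.ne_zero) (pow_ne_zero _ hq.ne_zero)
  apply Subset.antisymm
  · exact (Nat.primeFactors_mono hupper hbound).trans_eq (hsupp m.succ_ne_zero n.succ_ne_zero)
  · exact (hsupp one_ne_zero one_ne_zero).symm.trans_subset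
      (Nat.primeFactors_mono hlower (ne_zero_of_dvd_ne_zero hbound hupper))

lemma lt_FIBs_biprimeScales (hp : p.Prime) (hq : q.Prime) (hpq : p ≠ q) :
    p ^ m * q ^ n < FIBs (biprimeScales p q m n) := by
  have hS := two_le_of_mem_biprimeScales (m := m) (n := n) hp.two_le hq.two_le
  obtain ⟨A, hA, hcard, hfib⟩ := exists_card_eq_FIBs hS
  obtain ⟨hApq, hAp, hAq⟩ := forall_mem_biprimeScales.1 hfib
  replace hAp : ∀ j ∈ Icc 1 m, cyclotomic (p ^ (j + 1)) ℤ ∣ maskPoly A := fun j hj ↦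
    (hAp j hj).cyclotomic_dvd (pow_ne_zero _ hp.ne_zero)
  replace hAq : ∀ j ∈ Icc 1 n, cyclotomic (q ^ (j + 1)) ℤ ∣ maskPoly A := fun j hj ↦
    (hAq j hj).cyclotomic_dvd (pow_ne_zero _ hq.ne_zero)
  have hcop : ∀ i j, (p ^ i).Coprime (q ^ j) := fun i j ↦ Nat.coprime_pow_primes i j hp hq hpq
  rw [← hcard]
  rcases hApq.cyclotomic_dvd_of_mul hp hq hpq with h | h
  · have hq_dvd : q ^ n ∣ #A := by simpa using pow_card_dvd_card_of_cyclotomic_dvd hq hAq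
    calc p ^ m * q ^ n < p ^ (m + 1) * q ^ n :=
          Nat.mul_lt_mul_of_pos_right (Nat.pow_lt_pow_succ hp.one_lt) (pow_pos hq.pos n)
      _ ≤ #A := Nat.le_of_dvd hA.card_pos
          ((hcop _ _).mul_dvd_of_dvd_of_dvd (pow_succ_dvd_card_of_cyclotomic_dvd hp h hAp) hq_dvd)
  · have hp_dvd : p ^ m ∣ #A := by simpa using pow_card_dvd_card_of_cyclotomic_dvd hp hAp
    calc p ^ m * q ^ n < p ^ m * q ^ (n + 1) :=
          Nat.mul_lt_mul_of_pos_left (Nat.pow_lt_pow_succ hq.one_lt) (pow_pos hp.pos m)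
      _ ≤ #A := Nat.le_of_dvd hA.card_pos
          ((hcop _ _).mul_dvd_of_dvd_of_dvd hp_dvd (pow_succ_dvd_card_of_cyclotomic_dvd hq h hAq))

lemma MINs_biprimeScales_le_card (hp : 2 ≤ p) (hq : 2 ≤ q) (hpq : p.Coprime q) {ι : Type*}
    [Fintype ι] [Nonempty ι] {a : ι → ℕ} (ha : cyclotomic (p * q) ℤ ∣ ∑ i, X ^ a i)
    (hap : ∀ r, p ^ m ∣ #{i | a i % p = r}) (haq : ∀ r, q ^ n ∣ #{i | a i % q = r}) :
    MINs (biprimeScales p q m n) ≤ Fintype.card ι := by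
  obtain ⟨b, hba, hb⟩ := exists_equidistributed_lift a
    (pow_pos (zero_lt_two.trans_le hp) m) (hpq.symm.pow_right m) hap
  have hbq : ∀ r, q ^ n ∣ #{i | b i % q = r} := fun r ↦ by
    have hmod : ∀ i, b i % q = a i % q := fun i ↦ (hba i).of_dvd (dvd_mul_left q p)
    simpa only [hmod] using haq r
  obtain ⟨c, hcb, hc⟩ := exists_equidistributed_lift b
    (pow_pos (zero_lt_two.trans_le hq) n) ((hpq.pow_left (m + 1)).pow_right n) hbq
  have hpow_dvd : ∀ {t j k : ℕ}, j ∈ Icc 1 k → t ^ (j + 1) ∣ t ^ (k + 1) := fun hj ↦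
    pow_dvd_pow _ (Nat.succ_le_succ (mem_Icc.1 hj).2)
  have hpow_not_dvd : ∀ {t j k : ℕ}, 2 ≤ t → j ∈ Icc 1 k → ¬ t ^ (j + 1) ∣ t := fun ht hj ↦
    Nat.not_dvd_of_pos_of_lt (zero_lt_two.trans_le ht)
      (lt_self_pow₀ ht (Nat.succ_lt_succ (mem_Icc.1 hj).1))
  have hS : ∀ s ∈ biprimeScales p q m n, s ≠ 0 := fun s hs ↦
    (zero_lt_two.trans_le (two_le_of_mem_biprimeScales hp hq s hs)).ne'
  refine MINs_le_card (a := c) hS (forall_mem_biprimeScales.2 ⟨?_, fun j hj ↦ ?_, fun j hj ↦ ?_⟩)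
  · have hpq_dvd : p * q ∣ q * p ^ (m + 1) :=
      mul_comm p q ▸ mul_dvd_mul_left q (dvd_pow_self p m.succ_ne_zero)
    have hca : ∀ i ∈ univ, c i ≡ a i [MOD p * q] := fun i _ ↦
      ((hcb i).of_dvd hpq_dvd).trans (hba i)
    exact (cyclotomic_dvd_sum_X_pow_congr hca).2 ha
  · have hcb' : ∀ i ∈ univ, c i ≡ b i [MOD p ^ (j + 1)] := fun i _ ↦
      (hcb i).of_dvd ((hpow_dvd hj).mul_left q)
    exact (cyclotomic_dvd_sum_X_pow_congr hcb').2
      (hb _ (pow_succ' p m ▸ hpow_dvd hj) (hpow_not_dvd hp hj))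
  · exact hc _ (pow_succ' q n ▸ hpow_dvd hj) (hpow_not_dvd hq hj)

lemma cyclotomic_dvd_sum_add_mul_X_pow (hp : 2 ≤ p) (hq : 2 ≤ q) (f : Fin p → ℤ[X])
    (g : Fin q → ℤ[X]) :
    cyclotomic (p * q) ℤ ∣ ∑ x, ∑ y, (f x + g y) * X ^ (q * x + p * y : ℕ) := by
  have hsplit : ∑ x, ∑ y, (f x + g y) * X ^ (q * x + p * y : ℕ) =
      (∑ x, f x * X ^ (q * x : ℕ)) * (∑ y : Fin q, X ^ (p * y : ℕ)) +
        (∑ x : Fin p, X ^ (q * x : ℕ)) * ∑ y, g y * X ^ (p * y : ℕ) := by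
    simp only [sum_mul_sum, ← sum_add_distrib]
    refine sum_congr rfl fun x _ ↦ sum_congr rfl fun y _ ↦ ?_
    ring
  have hp0 : 0 < p := zero_lt_two.trans_le hp
  have hq0 : 0 < q := zero_lt_two.trans_le hq
  have hq_fiber : cyclotomic (p * q) ℤ ∣ ∑ y : Fin q, X ^ (p * y : ℕ) := by
    rw [← fiberPoly_mul_left_eq_sum_fin hq0]
    refine cyclotomic_dvd_fiberPoly (mul_pos hp0 hq0).ne' (dvd_mul_left q p) dvd_rfl ?_
    rw [Nat.mul_div_cancel _ hq0]
    exact Nat.not_dvd_of_pos_of_lt hp0 (lt_mul_of_one_lt_right hp0 hq)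
  have hp_fiber : cyclotomic (p * q) ℤ ∣ ∑ x : Fin p, X ^ (q * x : ℕ) := by
    rw [← fiberPoly_mul_left_eq_sum_fin hp0, mul_comm p q]
    refine cyclotomic_dvd_fiberPoly (mul_pos hq0 hp0).ne' (dvd_mul_left p q) dvd_rfl ?_
    rw [Nat.mul_div_cancel _ hp0]
    exact Nat.not_dvd_of_pos_of_lt hq0 (lt_mul_of_one_lt_right hq0 hp)
  rw [hsplit]
  exact dvd_add (hq_fiber.mul_left _) (hp_fiber.mul_right _)

lemma card_filter_sigma_fin {α : Type*} [Fintype α] (M : α → ℕ) (P : α → Prop) [DecidablePred P] :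
    #{i : Σ x, Fin (M x) | P i.1} = ∑ x, if P x then M x else 0 := by
  rw [card_filter, Fintype.sum_sigma]
  exact sum_congr rfl fun x _ ↦ by by_cases hx : P x <;> simp [hx]

lemma MINs_biprimeScales_le_sum (hp : 2 ≤ p) (hq : 2 ≤ q) (hpq : p.Coprime q)
    {f : Fin p → ℕ} {g : Fin q → ℕ} (hpos : 0 < ∑ x, ∑ y, (f x + g y))
    (hrow : ∀ x, p ^ m ∣ ∑ y, (f x + g y)) (hcol : ∀ y, q ^ n ∣ ∑ x, (f x + g y)) :
    MINs (biprimeScales p q m n) ≤ ∑ x, ∑ y, (f x + g y) := by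
  let M (z : Fin p × Fin q) := f z.1 + g z.2
  let a (i : Σ z, Fin (M z)) : ℕ := q * i.1.1 + p * i.1.2
  have hcard : Fintype.card (Σ z, Fin (M z)) = ∑ x, ∑ y, (f x + g y) := by
    simp only [M, Fintype.card_sigma, Fintype.card_fin, Fintype.sum_prod_type]
  have : Nonempty (Σ z, Fin (M z)) := Fintype.card_pos_iff.1 (hcard ▸ hpos)
  rw [← hcard]
  refine MINs_biprimeScales_le_card (a := a) hp hq hpq ?_ (fun r ↦ ?_) (fun r ↦ ?_)
  · simp only [a, M, Fintype.sum_sigma, Fintype.sum_prod_type, sum_const, card_univ,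
      Fintype.card_fin, nsmul_eq_mul, Nat.cast_add]
    exact cyclotomic_dvd_sum_add_mul_X_pow hp hq _ _
  · simp only [a, Nat.add_mul_mod_self_left]
    rw [card_filter_sigma_fin M fun z ↦ q * z.1 % p = r, Fintype.sum_prod_type]
    refine dvd_sum fun x _ ↦ ?_
    by_cases hx : q * x % p = r
    · simpa only [hx, if_true] using hrow x
    · simp [hx]
  · simp only [a, Nat.mul_add_mod_self_left]
    rw [card_filter_sigma_fin M fun z ↦ p * z.2 % q = r, Fintype.sum_prod_type_right]
    refine dvd_sum fun y _ ↦ ?_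
    by_cases hy : p * y % q = r
    · simpa only [hy, if_true] using hcol y
    · simp [hy]

/-! ### A coarse distribution beating fibered sets -/

lemma exists_pow_sub_one_eq_one_add_mul {a : ℕ} (hp : p.Prime) (ha : a.Coprime p) :
    ∃ t, a ^ (p - 1) = 1 + p * t := by
  have hfermat : a ^ (p - 1) ≡ 1 [MOD p] := by
    simpa [Nat.totient_prime hp] using Nat.ModEq.pow_totient ha
  have ha0 : 0 < a := Nat.pos_of_ne_zero fun h ↦ by simp [h, hp.ne_one] at ha
  have hle : 1 ≤ a ^ (p - 1) := Nat.one_le_pow _ _ ha0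
  obtain ⟨t, ht⟩ := (Nat.modEq_iff_dvd' hle).1 hfermat.symm
  exact ⟨t, by rw [← ht, Nat.add_sub_cancel' hle]⟩

-- The matrix with entries `c + p ^ q * [x = 0] + q ^ p * [y = 0]` for `x < p`, `y < q`: up to a
-- multiple of `p ^ q` its row sums are `q * c + q ^ p`, up to a multiple of `q ^ p` its column sums
-- are `p * c + p ^ q`, and the last equation is its total. That total forces
-- `c = p ^ (q - 1) * q ^ (p - 1) - p ^ (q - 1) - q ^ (p - 1)`.
lemma exists_matrix_offset (hp : p.Prime) (hq : q.Prime) (hpq : p ≠ q) :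
    ∃ c, p ^ q ∣ q * c + q ^ p ∧ q ^ p ∣ p * c + p ^ q ∧
      q * (p * c + p ^ q) + p * q ^ p = p ^ q * q ^ p := by
  obtain ⟨t, ht⟩ := exists_pow_sub_one_eq_one_add_mul hp ((Nat.coprime_primes hq hp).2 hpq.symm)
  obtain ⟨s, hs⟩ := exists_pow_sub_one_eq_one_add_mul hq ((Nat.coprime_primes hp hq).2 hpq)
  have ha : 2 ≤ p ^ (q - 1) := hp.two_le.trans (Nat.le_self_pow (Nat.sub_ne_zero_of_lt hq.one_lt) p)
  have hb : 2 ≤ q ^ (p - 1) := hq.two_le.trans (Nat.le_self_pow (Nat.sub_ne_zero_of_lt hp.one_lt) q)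
  rw [← pow_sub_one_mul hq.ne_zero p, ← pow_sub_one_mul hp.ne_zero q]
  generalize p ^ (q - 1) = a at *
  generalize q ^ (p - 1) = b at *
  obtain ⟨c, hc⟩ := Nat.exists_eq_add_of_le (Nat.add_le_mul ha hb)
  refine ⟨c, ⟨q * t, ?_⟩, ⟨p * s, ?_⟩, ?_⟩
  all_goals zify at hc ht hs ⊢
  · linear_combination -q * hc + q * a * ht
  · linear_combination -p * hc + p * b * hs
  · linear_combination -p * q * hc

lemma MINs_biprimeScales_le (hp : p.Prime) (hq : q.Prime) (hpq : p ≠ q) :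
    MINs (biprimeScales p q q p) ≤ p ^ q * q ^ p := by
  obtain ⟨c, hrow, hcol, htotal⟩ := exists_matrix_offset hp hq hpq
  have : NeZero p := ⟨hp.ne_zero⟩
  have : NeZero q := ⟨hq.ne_zero⟩
  let u : Fin p → ℕ := Pi.single 0 (p ^ q)
  let v : Fin q → ℕ := Pi.single 0 (q ^ p)
  have hu : ∀ x, p ^ q ∣ u x := by simp [u, Pi.single_apply, apply_ite]
  have hv : ∀ y, q ^ p ∣ v y := by simp [v, Pi.single_apply, apply_ite]
  have hrow_sum (x) : ∑ y, (c + u x + v y) = q * c + q ^ p + q * u x := by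
    simp [v, sum_add_distrib]
    ring
  have hcol_sum (y) : ∑ x, (c + u x + v y) = p * c + p ^ q + p * v y := by
    simp [u, sum_add_distrib]
  have hsum : ∑ x, ∑ y, (c + u x + v y) = p ^ q * q ^ p := by
    rw [sum_comm, ← htotal]
    simp [hcol_sum, sum_add_distrib, ← mul_sum, v]
  rw [← hsum]
  refine MINs_biprimeScales_le_sum hp.two_le hq.two_le ((Nat.coprime_primes hp hq).2 hpq)
    (hsum ▸ mul_pos (pow_pos hp.pos q) (pow_pos hq.pos p)) (fun x ↦ ?_) (fun y ↦ ?_)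
  · exact hrow_sum x ▸ hrow.add ((hu x).mul_left q)
  · exact hcol_sum y ▸ hcol.add ((hv y).mul_left p)

end TwoPrimes

theorem exists_min_lt_fib_two_primes_general {p q : ℕ} (hp : p.Prime) (hq : q.Prime)
    (hpq : p ≠ q) :
    ∃ S : Finset ℕ, S.Nonempty ∧ (∀ s ∈ S, 2 ≤ s) ∧
      (S.lcm id).primeFactors = {p, q} ∧ MINs S < FIBs S :=
  ⟨biprimeScales p q q p, insert_nonempty _ _, two_le_of_mem_biprimeScales hp.two_le hq.two_le,
    primeFactors_lcm_biprimeScales hp hq,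
    (MINs_biprimeScales_le hp hq hpq).trans_lt (lt_FIBs_biprimeScales hp hq hpq)⟩

/-- Theorem 1.4: there is a finite nonempty set `S` of integers `≥ 2` such that
`lcm(S)` has exactly two distinct prime factors and `MIN(S) < FIB(S)`. -/
theorem exists_min_lt_fib_two_primes :
    ∃ S : Finset ℕ, S.Nonempty ∧ (∀ s ∈ S, 2 ≤ s) ∧
      (S.lcm id).primeFactors.card = 2 ∧ MINs S < FIBs S := by
  obtain ⟨S, hne, hS, hlcm, hlt⟩ :=
    exists_min_lt_fib_two_primes_general Nat.prime_two Nat.prime_three (by decide)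
  exact ⟨S, hne, hS, hlcm ▸ rfl, hlt⟩
end

section
/- Let p_1 < p_2 < p_3 < p_4 be primes with p_1 > 40 and p_{i+1} < 2 p_i for i = 1, 2, 3, and let M = (p_1 p_2 p_3 p_4)^4. Then there exists a set A ⊆ ℤ_M such that: (i) for every prime power p^α with α ≥ 1, Φ_{p^α}(X) ∣ A(X) if and only if p ∈ {p_1, p_2, p_3, p_4} and α ∈ {2, 3, 4}; (ii) |A| = (p_1 p_2 p_3 p_4)^3 and A satisfies (T1) and (T2); (iii) Φ_{p_1 p_2 p_3 p_4}(X) ∣ A(X). -/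
open Polynomial

/-- Mask polynomial of a finite subset of `ZMod M`: `A(X) = ∑_{a ∈ A} X^{a.val}`. -/
noncomputable def zmaskPoly (M : ℕ) (A : Finset (ZMod M)) : Polynomial ℤ :=
  ∑ a ∈ A, X ^ a.val

/-- `S_A^*`: the set of prime powers `p^α` (`α ≥ 1`) with `Φ_{p^α}(X) ∣ A(X)`. -/
def SAstar (M : ℕ) (A : Finset (ZMod M)) : Set ℕ :=
  {s | IsPrimePow s ∧ cyclotomic s ℤ ∣ zmaskPoly M A}

/-- Property (T1): `|A| = ∏_{s ∈ S_A^*} Φ_s(1)`. -/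
def PropT1 (M : ℕ) (A : Finset (ZMod M)) : Prop :=
  (A.card : ℤ) = ∏ᶠ s ∈ SAstar M A, (cyclotomic s ℤ).eval 1

/-- Property (T2): whenever `s_1, …, s_k ∈ S_A^*` are powers of distinct primes,
`Φ_{s_1⋯s_k}(X) ∣ A(X)`. -/
def PropT2 (M : ℕ) (A : Finset (ZMod M)) : Prop :=
  ∀ T : Finset ℕ, T.Nonempty → ↑T ⊆ SAstar M A → (T : Set ℕ).Pairwise Nat.Coprime →
    cyclotomic (∏ s ∈ T, s) ℤ ∣ zmaskPoly M A

/-!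
Write `N = a * b * n` and `m = a * b`. Start from the multiples `N * j`, `j < N ^ k`, of `N` in
`ZMod (N ^ (k + 1))`: for `d ∣ N ^ (k + 1)`, the polynomial `Φ_d` divides their mask polynomial
iff `d ∤ N`. Cut them into the `n ^ k` classes of `j` modulo `n ^ k`, and translate each class by a
multiple of `n ^ (k + 1)`. A root of `Φ_d` does not see the translations when `d ∣ n ^ (k + 1)`,
and each single class already vanishes at it when `d ∤ N * n ^ k`; so `Φ_d` survives for every
`d ≠ 1` all of whose prime factors are repeated, which gives (T2). At a primitive `N`-th root of
unity all classes have the same weight before translation and only the translations matter: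
writing `n ^ k = a * u + b * v`, one chooses them so that the first `a * u` weights run through
the `a`-th roots of unity and the other `b * v` through the `b`-th roots of unity, so that they
cancel.

There are no further prime power divisors because the `Φ_{p ^ α}(1) = p` found so far already
multiply to `|A|`.
-/

section CyclotomicDivisibility

lemma cyclotomic_dvd_of_forall_aeval_eq_zero {F : ℤ[X]} {d : ℕ} (hd : d ≠ 0)
    (h : ∀ z : ℂ, IsPrimitiveRoot z d → aeval z F = 0) : cyclotomic d ℤ ∣ F := by
  have hz := Complex.isPrimitiveRoot_exp d hd
  have hd' := Nat.pos_of_ne_zero hd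
  rw [cyclotomic_eq_minpoly hz hd']
  exact minpoly.isIntegrallyClosed_dvd (hz.isIntegral hd') (h _ hz)

lemma isRelPrime_cyclotomic_int {s t : ℕ} (hs : 0 < s) (ht : 0 < t) (hst : s ≠ t) :
    IsRelPrime (cyclotomic s ℤ) (cyclotomic t ℤ) := by
  rw [(cyclotomic.irreducible hs).isRelPrime_iff_not_dvd]
  intro hdvd
  have hassoc := (cyclotomic.irreducible hs).associated_of_dvd (cyclotomic.irreducible ht) hdvd
  exact hst <| cyclotomic_injective (R := ℤ) <|
    eq_of_monic_of_associated (cyclotomic.monic s ℤ) (cyclotomic.monic t ℤ) hassoc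

lemma prod_cyclotomic_dvd {S : Finset ℕ} {F : ℤ[X]} (hpos : ∀ s ∈ S, 0 < s)
    (hdvd : ∀ s ∈ S, cyclotomic s ℤ ∣ F) : ∏ s ∈ S, cyclotomic s ℤ ∣ F :=
  Finset.prod_dvd_of_isRelPrime
    (fun s hs t ht hst => isRelPrime_cyclotomic_int (hpos s hs) (hpos t ht) hst) hdvd

lemma eval_one_cyclotomic_pow_of_prime {p α : ℕ} (hp : p.Prime) (hα : α ≠ 0) :
    (cyclotomic (p ^ α) ℤ).eval 1 = p := by
  obtain ⟨β, rfl⟩ := Nat.exists_eq_succ_of_ne_zero hα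
  have := Fact.mk hp
  exact eval_one_cyclotomic_prime_pow β

end CyclotomicDivisibility

section GeometricSums

lemma geom_sum_eq_zero_of_pow_eq_one {R : Type*} [Ring R] [NoZeroDivisors R] {w : R} {r : ℕ}
    (hw : w ≠ 1) (hr : w ^ r = 1) : ∑ i ∈ Finset.range r, w ^ i = 0 := by
  have h : (∑ i ∈ Finset.range r, w ^ i) * (w - 1) = 0 := by rw [geom_sum_mul, hr, sub_self]
  exact (mul_eq_zero.mp h).resolve_right (sub_ne_zero.mpr hw)

lemma sum_range_mul_eq_sum_sum {M : Type*} [AddCommMonoid M] (g : ℕ → M) (q r : ℕ) :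
    ∑ j ∈ Finset.range (q * r), g j =
      ∑ i ∈ Finset.range r, ∑ t ∈ Finset.range q, g (q * i + t) := by
  induction r with
  | zero => simp
  | succ r ih => rw [mul_add, mul_one, Finset.sum_range_add, ih, Finset.sum_range_succ]

/-- The exponents assigned to `t < a * u + b * v`: the first `a * u` indices get multiples of `b`,
the others multiples of `a`, so that an `(a * b)`-th root of unity raised to these exponents runs
first through `a`-th and then through `b`-th roots of unity. -/
def blockExponent (a b u t : ℕ) : ℕ :=
  if t < a * u then b * t else a * t

lemma sum_pow_blockExponent_eq_zero {R : Type*} [CommRing R] [NoZeroDivisors R] {a b : ℕ} {ζ : R}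
    (ha : 1 < a) (hb : 1 < b) (hζ : IsPrimitiveRoot ζ (a * b)) (u v : ℕ) :
    ∑ t ∈ Finset.range (a * u + b * v), ζ ^ blockExponent a b u t = 0 := by
  have hab : 0 < a * b := by positivity
  have hζb : IsPrimitiveRoot (ζ ^ b) a := hζ.pow hab (mul_comm a b)
  have hζa : IsPrimitiveRoot (ζ ^ a) b := hζ.pow hab rfl
  have first : ∑ t ∈ Finset.range (a * u), ζ ^ blockExponent a b u t = 0 := by
    rw [← geom_sum_eq_zero_of_pow_eq_one (r := a * u) (hζb.ne_one ha)
      (by rw [pow_mul, hζb.pow_eq_one, one_pow])]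
    refine Finset.sum_congr rfl fun t ht => ?_
    rw [blockExponent, if_pos (Finset.mem_range.mp ht), pow_mul]
  have second : ∑ t ∈ Finset.range (b * v), ζ ^ blockExponent a b u (a * u + t) = 0 := by
    rw [← mul_zero ((ζ ^ a) ^ (a * u)), ← geom_sum_eq_zero_of_pow_eq_one (r := b * v)
      (hζa.ne_one hb) (by rw [pow_mul, hζa.pow_eq_one, one_pow]), Finset.mul_sum]
    refine Finset.sum_congr rfl fun t _ => ?_
    rw [blockExponent, if_neg (by omega), pow_mul, pow_add]
  rw [Finset.sum_range_add, first, second, add_zero]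

end GeometricSums

section Powerful

/-- Powerful (square-full) numbers: every prime factor occurs at least twice. Products of the
prime powers in (T2) are of this kind. With this definition `0` and `1` are powerful. -/
def IsPowerful (d : ℕ) : Prop :=
  ∀ p : ℕ, p.Prime → p ∣ d → p ^ 2 ∣ d

lemma isPowerful_pow (s : ℕ) {α : ℕ} (hα : 2 ≤ α) : IsPowerful (s ^ α) := fun _ hp hps =>
  (pow_dvd_pow_of_dvd (hp.dvd_of_dvd_pow hps) 2).trans (pow_dvd_pow s hα)

lemma isPowerful_prod {ι : Type*} {T : Finset ι} {f : ι → ℕ} (hT : ∀ i ∈ T, IsPowerful (f i)) :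
    IsPowerful (∏ i ∈ T, f i) := by
  intro p hp hpT
  obtain ⟨i, hi, hpi⟩ := (hp.prime.dvd_finsetProd_iff f).mp hpT
  exact (hT i hi p hp hpi).trans (Finset.dvd_prod_of_mem f hi)

lemma IsPowerful.dvd_of_dvd_squarefree_mul {d m r : ℕ} (hd : IsPowerful d) (hm : Squarefree m)
    (hmr : m.Coprime r) (hdvd : d ∣ m * r) : d ∣ r := by
  refine Nat.Coprime.dvd_of_dvd_mul_left (Nat.coprime_of_dvd fun p hp hpd hpm => ?_) hdvd
  have hpr : (p ^ 2).Coprime r := (hmr.coprime_dvd_left hpm).pow_left 2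
  have hp2m : p ^ 2 ∣ m := hpr.dvd_of_dvd_mul_right ((hd p hp hpd).trans hdvd)
  exact Nat.squarefree_iff_prime_squarefree.mp hm p hp (pow_two p ▸ hp2m)

lemma IsPowerful.eq_one_of_dvd_squarefree {d m : ℕ} (hd : IsPowerful d) (hm : Squarefree m)
    (hdvd : d ∣ m) : d = 1 :=
  Nat.dvd_one.mp <| hd.dvd_of_dvd_squarefree_mul hm (Nat.coprime_one_right m) (by simpa using hdvd)

end Powerful

section MaskPolynomial

variable {M : ℕ} {A : Finset (ZMod M)}

lemma eval_one_zmaskPoly : (zmaskPoly M A).eval 1 = A.card := by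
  simp [zmaskPoly, eval_finsetSum]

lemma aeval_zmaskPoly_image_natCast {R : Type*} [CommRing R] {s : Finset ℕ} {f : ℕ → ℕ} {z : R}
    (hf : Set.InjOn (fun j => (f j : ZMod M)) s) (hz : z ^ M = 1) :
    aeval z (zmaskPoly M (s.image fun j => (f j : ZMod M))) = ∑ j ∈ s, z ^ f j := by
  rw [zmaskPoly, Finset.sum_image hf, map_sum]
  refine Finset.sum_congr rfl fun j _ => ?_
  rw [map_pow, aeval_X, ZMod.val_natCast, ← pow_eq_pow_mod _ hz]

lemma SAstar_eq_of_card_eq_prod {S : Finset ℕ} (hA : A.Nonempty) (hS : ∀ s ∈ S, IsPrimePow s)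
    (hdvd : ∀ s ∈ S, cyclotomic s ℤ ∣ zmaskPoly M A)
    (hcard : (A.card : ℤ) = ∏ s ∈ S, (cyclotomic s ℤ).eval 1) : SAstar M A = S := by
  refine Set.Subset.antisymm ?_ fun s hs => ⟨hS s hs, hdvd s hs⟩
  rintro s ⟨hs, hsA⟩
  by_contra hsS
  have hprod : ∏ t ∈ insert s S, cyclotomic t ℤ ∣ zmaskPoly M A :=
    prod_cyclotomic_dvd (Finset.forall_mem_insert _ _ _ |>.mpr ⟨hs.pos, fun t ht => (hS t ht).pos⟩)
      (Finset.forall_mem_insert _ _ _ |>.mpr ⟨hsA, hdvd⟩)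
  obtain ⟨p, α, hp, hα, rfl⟩ := (isPrimePow_nat_iff s).mp hs
  have hpA : (p : ℤ) * A.card ∣ A.card := by
    have heval := eval_dvd (x := 1) hprod
    rwa [eval_prod, Finset.prod_insert hsS, ← hcard, eval_one_zmaskPoly,
      eval_one_cyclotomic_pow_of_prime hp hα.ne'] at heval
  have hpA' : p * A.card ∣ 1 * A.card := by rw [one_mul]; exact_mod_cast hpA
  exact hp.one_lt.ne' (Nat.dvd_one.mp (Nat.dvd_of_mul_dvd_mul_right hA.card_pos hpA'))

end MaskPolynomial

section HigherPrimePowers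

lemma eq_and_eq_of_prime_pow_eq {p q α β : ℕ} (hp : p.Prime) (hq : q.Prime) (hα : α ≠ 0)
    (h : p ^ α = q ^ β) : p = q ∧ α = β := by
  obtain rfl := eq_of_prime_pow_eq hp.prime hq.prime (Nat.pos_of_ne_zero hα) h
  exact ⟨rfl, Nat.pow_right_injective hp.two_le h⟩

/-- The prime powers `p ^ α` with `p ∣ N` and `2 ≤ α ≤ k + 1`; for squarefree `N` these are the
prime powers that divide `N ^ (k + 1)` but not `N`. -/
def higherPrimePowers (N k : ℕ) : Finset ℕ :=
  (N.primeFactors ×ˢ Finset.Icc 2 (k + 1)).image fun x => x.1 ^ x.2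

variable {N k s : ℕ}

lemma mem_higherPrimePowers : s ∈ higherPrimePowers N k ↔
    ∃ p α, p ∈ N.primeFactors ∧ (2 ≤ α ∧ α ≤ k + 1) ∧ p ^ α = s := by
  simp only [higherPrimePowers, Finset.mem_image, Finset.mem_product, Finset.mem_Icc, Prod.exists,
    and_assoc]

lemma pow_mem_higherPrimePowers {p α : ℕ} (hN : N ≠ 0) (hp : p.Prime) :
    p ^ α ∈ higherPrimePowers N k ↔ p ∣ N ∧ 2 ≤ α ∧ α ≤ k + 1 := by
  refine ⟨fun h => ?_, fun ⟨hpN, hα'⟩ =>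
    mem_higherPrimePowers.mpr ⟨p, α, Nat.mem_primeFactors.mpr ⟨hp, hpN, hN⟩, hα', rfl⟩⟩
  obtain ⟨q, β, hq, hβ, heq⟩ := mem_higherPrimePowers.mp h
  obtain ⟨rfl, rfl⟩ :=
    eq_and_eq_of_prime_pow_eq (Nat.prime_of_mem_primeFactors hq) hp (by omega) heq
  exact ⟨Nat.dvd_of_mem_primeFactors hq, hβ⟩

lemma isPrimePow_of_mem_higherPrimePowers (hs : s ∈ higherPrimePowers N k) : IsPrimePow s := by
  obtain ⟨p, α, hp, hα, rfl⟩ := mem_higherPrimePowers.mp hs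
  exact (Nat.prime_of_mem_primeFactors hp).isPrimePow.pow (by omega)

lemma isPowerful_of_mem_higherPrimePowers (hs : s ∈ higherPrimePowers N k) : IsPowerful s := by
  obtain ⟨p, α, -, hα, rfl⟩ := mem_higherPrimePowers.mp hs
  exact isPowerful_pow p hα.1

lemma dvd_pow_of_mem_higherPrimePowers (hs : s ∈ higherPrimePowers N k) : s ∣ N ^ (k + 1) := by
  obtain ⟨p, α, hp, hα, rfl⟩ := mem_higherPrimePowers.mp hs
  exact (pow_dvd_pow p hα.2).trans (pow_dvd_pow_of_dvd (Nat.dvd_of_mem_primeFactors hp) _)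

lemma prod_eval_one_cyclotomic_higherPrimePowers (hN : Squarefree N) :
    ∏ s ∈ higherPrimePowers N k, (cyclotomic s ℤ).eval 1 = (N : ℤ) ^ k := by
  have hinj : Set.InjOn (fun x : ℕ × ℕ => x.1 ^ x.2)
      (N.primeFactors ×ˢ Finset.Icc 2 (k + 1) : Finset (ℕ × ℕ)) := by
    rintro ⟨p, α⟩ hx ⟨q, β⟩ hy heq
    simp only [Finset.mem_coe, Finset.mem_product, Finset.mem_Icc] at hx hy
    exact Prod.ext_iff.mpr <| eq_and_eq_of_prime_pow_eq (Nat.prime_of_mem_primeFactors hx.1)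
      (Nat.prime_of_mem_primeFactors hy.1) (by omega) heq
  calc ∏ s ∈ higherPrimePowers N k, (cyclotomic s ℤ).eval 1
      = ∏ p ∈ N.primeFactors, ∏ α ∈ Finset.Icc 2 (k + 1), (cyclotomic (p ^ α) ℤ).eval 1 := by
        rw [higherPrimePowers, Finset.prod_image hinj, Finset.prod_product]
    _ = ∏ p ∈ N.primeFactors, (p : ℤ) ^ k := by
        refine Finset.prod_congr rfl fun p hp => ?_
        rw [Finset.prod_congr rfl fun α hα => eval_one_cyclotomic_pow_of_prime
          (Nat.prime_of_mem_primeFactors hp) (by have := Finset.mem_Icc.mp hα; omega)]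
        simp
    _ = (N : ℤ) ^ k := by
        rw [Finset.prod_pow, ← Nat.cast_prod, Nat.prod_primeFactors_of_squarefree hN]

end HigherPrimePowers

section PowerfulDivisors

variable {N k M : ℕ} {A : Finset (ZMod M)}

lemma SAstar_eq_higherPrimePowers (hN : Squarefree N) (hcard : A.card = N ^ k)
    (hdvd : ∀ d, d ∣ N ^ (k + 1) → IsPowerful d → d ≠ 1 → cyclotomic d ℤ ∣ zmaskPoly M A) :
    SAstar M A = higherPrimePowers N k := by
  refine SAstar_eq_of_card_eq_prod ?_ (fun s => isPrimePow_of_mem_higherPrimePowers)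
    (fun s hs => hdvd s (dvd_pow_of_mem_higherPrimePowers hs)
      (isPowerful_of_mem_higherPrimePowers hs) (isPrimePow_of_mem_higherPrimePowers hs).ne_one) ?_
  · rw [← Finset.card_pos, hcard]
    exact pow_pos (Nat.pos_of_ne_zero hN.ne_zero) k
  · rw [hcard, prod_eval_one_cyclotomic_higherPrimePowers hN, Nat.cast_pow]

lemma propT1_of_SAstar_eq_higherPrimePowers (hN : Squarefree N) (hcard : A.card = N ^ k)
    (hS : SAstar M A = higherPrimePowers N k) : PropT1 M A := by
  rw [PropT1, hS, finprod_mem_coe_finset, prod_eval_one_cyclotomic_higherPrimePowers hN, hcard,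
    Nat.cast_pow]

lemma propT2_of_SAstar_eq_higherPrimePowers (hS : SAstar M A = higherPrimePowers N k)
    (hdvd : ∀ d, d ∣ N ^ (k + 1) → IsPowerful d → d ≠ 1 → cyclotomic d ℤ ∣ zmaskPoly M A) :
    PropT2 M A := by
  intro T hne hT hco
  have hmem : ∀ s ∈ T, s ∈ higherPrimePowers N k := fun s hs =>
    Finset.mem_coe.mp (hS ▸ hT (Finset.mem_coe.mpr hs))
  refine hdvd _ (Finset.prod_dvd_of_isRelPrime
      (fun s hs t ht hst => Nat.coprime_iff_isRelPrime.mp (hco hs ht hst))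
      fun s hs => dvd_pow_of_mem_higherPrimePowers (hmem s hs))
    (isPowerful_prod fun s hs => isPowerful_of_mem_higherPrimePowers (hmem s hs)) fun hone => ?_
  obtain ⟨s, hs⟩ := hne
  exact (isPrimePow_of_mem_higherPrimePowers (hmem s hs)).ne_one
    (Nat.dvd_one.mp (hone ▸ Finset.dvd_prod_of_mem _ hs))

end PowerfulDivisors

section ShiftedMultiples

/-- The multiples `m * n * j` of `m * n` in `ZMod ((m * n) ^ (k + 1))`, the class of those with
`j ≡ t` modulo `n ^ k` being translated by `n ^ (k + 1) * σ t`. -/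
def shiftedMultiples (m n k : ℕ) (σ : ℕ → ℕ) : Finset (ZMod ((m * n) ^ (k + 1))) :=
  (Finset.range ((m * n) ^ k)).image fun j =>
    ((m * n * j + n ^ (k + 1) * σ (j % n ^ k) : ℕ) : ZMod ((m * n) ^ (k + 1)))

variable {m n k d : ℕ} {σ : ℕ → ℕ}

lemma injOn_shiftedMultiples (h0 : m * n ≠ 0) (hmn : m.Coprime n) :
    Set.InjOn (fun j => ((m * n * j + n ^ (k + 1) * σ (j % n ^ k) : ℕ) :
      ZMod ((m * n) ^ (k + 1)))) (Finset.range ((m * n) ^ k)) := by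
  intro i hi j hj hij
  replace hij := (ZMod.natCast_eq_natCast_iff _ _ _).mp hij
  have hclass : i % n ^ k = j % n ^ k := by
    have hmod : n * (m * i) ≡ n * (m * j) [MOD n * n ^ k] := by
      have hshift (l t : ℕ) : m * n * l + n ^ (k + 1) * t ≡ n * (m * l) [MOD n * n ^ k] := by
        rw [show m * n * l + n ^ (k + 1) * t = n * (m * l) + n * n ^ k * t by ring]
        exact Nat.add_mul_mod_self_left _ _ _
      have hM : n * n ^ k ∣ (m * n) ^ (k + 1) := ⟨m ^ (k + 1), by ring⟩
      exact (hshift i _).symm.trans ((hij.of_dvd hM).trans (hshift j _))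
    have hcancel := Nat.ModEq.mul_left_cancel' (right_ne_zero_of_mul h0) hmod
    exact hcancel.cancel_left_of_coprime (hmn.symm.pow_left k)
  rw [hclass, pow_succ' (m * n)] at hij
  have hmod : i ≡ j [MOD (m * n) ^ k] := Nat.ModEq.mul_left_cancel' h0 (hij.add_right_cancel' _)
  exact hmod.eq_of_lt_of_lt (by simpa using hi) (by simpa using hj)

lemma card_shiftedMultiples (h0 : m * n ≠ 0) (hmn : m.Coprime n) :
    (shiftedMultiples m n k σ).card = (m * n) ^ k := by
  rw [shiftedMultiples, Finset.card_image_of_injOn (injOn_shiftedMultiples h0 hmn),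
    Finset.card_range]

lemma aeval_zmaskPoly_shiftedMultiples {R : Type*} [CommRing R] {z : R} (h0 : m * n ≠ 0)
    (hmn : m.Coprime n) (hz : z ^ (m * n) ^ (k + 1) = 1) :
    aeval z (zmaskPoly _ (shiftedMultiples m n k σ)) =
      (∑ i ∈ Finset.range (m ^ k), (z ^ (m * n ^ (k + 1))) ^ i) *
        ∑ t ∈ Finset.range (n ^ k), (z ^ (m * n)) ^ t * (z ^ n ^ (k + 1)) ^ σ t := by
  rw [shiftedMultiples, aeval_zmaskPoly_image_natCast (injOn_shiftedMultiples h0 hmn) hz,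
    mul_pow, mul_comm (m ^ k), sum_range_mul_eq_sum_sum, Finset.sum_mul_sum]
  refine Finset.sum_congr rfl fun i _ => Finset.sum_congr rfl fun t ht => ?_
  rw [Nat.mul_add_mod, Nat.mod_eq_of_lt (Finset.mem_range.mp ht)]
  ring

lemma cyclotomic_dvd_zmaskPoly_shiftedMultiples_of_not_dvd_mul (h0 : m * n ≠ 0)
    (hmn : m.Coprime n) (hd : d ∣ (m * n) ^ (k + 1)) (hd' : ¬ d ∣ m * n ^ (k + 1)) :
    cyclotomic d ℤ ∣ zmaskPoly _ (shiftedMultiples m n k σ) := by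
  refine cyclotomic_dvd_of_forall_aeval_eq_zero
    (ne_zero_of_dvd_ne_zero (pow_ne_zero _ h0) hd) fun z hz => ?_
  have hzM : z ^ (m * n) ^ (k + 1) = 1 := (hz.pow_eq_one_iff_dvd _).mpr hd
  rw [aeval_zmaskPoly_shiftedMultiples h0 hmn hzM, geom_sum_eq_zero_of_pow_eq_one
    (mt (hz.pow_eq_one_iff_dvd _).mp hd') (by rw [← pow_mul, ← hzM]; ring), zero_mul]

lemma cyclotomic_dvd_zmaskPoly_shiftedMultiples_of_dvd_pow (h0 : m * n ≠ 0)
    (hmn : m.Coprime n) (hd : d ∣ n ^ (k + 1)) (hd' : ¬ d ∣ m * n) :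
    cyclotomic d ℤ ∣ zmaskPoly _ (shiftedMultiples m n k σ) := by
  refine cyclotomic_dvd_of_forall_aeval_eq_zero
    (ne_zero_of_dvd_ne_zero (pow_ne_zero _ (right_ne_zero_of_mul h0)) hd) fun z hz => ?_
  have hzn : z ^ n ^ (k + 1) = 1 := (hz.pow_eq_one_iff_dvd _).mpr hd
  have hzM : z ^ (m * n) ^ (k + 1) = 1 := by rw [mul_pow, mul_comm, pow_mul, hzn, one_pow]
  have hzN : (z ^ (m * n)) ^ n ^ k = 1 := by
    rw [← pow_mul, mul_assoc, ← pow_succ', mul_comm, pow_mul, hzn, one_pow]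
  rw [aeval_zmaskPoly_shiftedMultiples h0 hmn hzM]
  simp only [hzn, one_pow, mul_one]
  rw [geom_sum_eq_zero_of_pow_eq_one (mt (hz.pow_eq_one_iff_dvd _).mp hd') hzN, mul_zero]

lemma cyclotomic_dvd_zmaskPoly_shiftedMultiples_of_isPowerful (hmn : Squarefree (m * n))
    (hd : d ∣ (m * n) ^ (k + 1)) (hpow : IsPowerful d) (hd1 : d ≠ 1) :
    cyclotomic d ℤ ∣ zmaskPoly _ (shiftedMultiples m n k σ) := by
  have hco := Nat.coprime_of_squarefree_mul hmn
  by_cases hd' : d ∣ m * n ^ (k + 1)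
  · refine cyclotomic_dvd_zmaskPoly_shiftedMultiples_of_dvd_pow hmn.ne_zero hco ?_
      (mt (hpow.eq_one_of_dvd_squarefree hmn) hd1)
    exact hpow.dvd_of_dvd_squarefree_mul hmn.of_mul_left (hco.pow_right _) hd'
  · exact cyclotomic_dvd_zmaskPoly_shiftedMultiples_of_not_dvd_mul hmn.ne_zero hco hd hd'

lemma cyclotomic_mul_dvd_zmaskPoly_shiftedMultiples (h0 : m * n ≠ 0) (hmn : m.Coprime n)
    (hσ : ∀ ζ : ℂ, IsPrimitiveRoot ζ m → ∑ t ∈ Finset.range (n ^ k), ζ ^ σ t = 0) :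
    cyclotomic (m * n) ℤ ∣ zmaskPoly _ (shiftedMultiples m n k σ) := by
  refine cyclotomic_dvd_of_forall_aeval_eq_zero h0 fun z hz => ?_
  have hzM : z ^ (m * n) ^ (k + 1) = 1 := by rw [pow_succ', pow_mul, hz.pow_eq_one, one_pow]
  have hζ : IsPrimitiveRoot (z ^ n ^ (k + 1)) m := by
    rw [pow_succ', pow_mul]
    exact (hz.pow (Nat.pos_of_ne_zero h0) (mul_comm m n)).pow_of_coprime _ (hmn.symm.pow_left k)
  rw [aeval_zmaskPoly_shiftedMultiples h0 hmn hzM]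
  simp only [hz.pow_eq_one, one_pow, one_mul, hσ _ hζ, mul_zero]

end ShiftedMultiples

theorem exists_T2_unsupported_four_primes_general {a b n k u v : ℕ} (ha : 1 < a) (hb : 1 < b)
    (hsq : Squarefree (a * b * n)) (huv : a * u + b * v = n ^ k) :
    ∃ A : Finset (ZMod ((a * b * n) ^ (k + 1))),
      (∀ p α : ℕ, p.Prime → 1 ≤ α →
        (cyclotomic (p ^ α) ℤ ∣ zmaskPoly ((a * b * n) ^ (k + 1)) A ↔
          p ∣ a * b * n ∧ 2 ≤ α ∧ α ≤ k + 1)) ∧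
      A.card = (a * b * n) ^ k ∧
      PropT1 ((a * b * n) ^ (k + 1)) A ∧
      PropT2 ((a * b * n) ^ (k + 1)) A ∧
      cyclotomic (a * b * n) ℤ ∣ zmaskPoly ((a * b * n) ^ (k + 1)) A := by
  have hco := Nat.coprime_of_squarefree_mul hsq
  let A := shiftedMultiples (a * b) n k (blockExponent a b u)
  have hcard : A.card = (a * b * n) ^ k := card_shiftedMultiples hsq.ne_zero hco
  have hdvd : ∀ d, d ∣ (a * b * n) ^ (k + 1) → IsPowerful d → d ≠ 1 →
      cyclotomic d ℤ ∣ zmaskPoly _ A := fun d =>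
    cyclotomic_dvd_zmaskPoly_shiftedMultiples_of_isPowerful hsq
  have hS := SAstar_eq_higherPrimePowers hsq hcard hdvd
  refine ⟨A, fun p α hp hα => ?_, hcard, propT1_of_SAstar_eq_higherPrimePowers hsq hcard hS,
    propT2_of_SAstar_eq_higherPrimePowers hS hdvd, ?_⟩
  · have hmem : p ^ α ∈ SAstar _ A ↔ cyclotomic (p ^ α) ℤ ∣ zmaskPoly _ A :=
      and_iff_right (hp.isPrimePow.pow (Nat.one_le_iff_ne_zero.mp hα))
    rw [← hmem, hS, Finset.mem_coe, pow_mem_higherPrimePowers hsq.ne_zero hp]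
  · refine cyclotomic_mul_dvd_zmaskPoly_shiftedMultiples hsq.ne_zero hco fun ζ hζ => ?_
    rw [← huv]
    exact sum_pow_blockExponent_eq_zero ha hb hζ u v

/-- Theorem 9.1: for primes `40 < p₁ < p₂ < p₃ < p₄` with `p_{i+1} < 2 p_i` and
`M = (p₁p₂p₃p₄)^4`, there is a set `A ⊆ ℤ_M` whose prime power cyclotomic divisors are
exactly `Φ_{p_i^α}` for `α ∈ {2,3,4}`, which satisfies (T1) and (T2) with
`|A| = (p₁p₂p₃p₄)^3`, and which has the unsupported divisor `Φ_{p₁p₂p₃p₄}`. -/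
theorem exists_T2_unsupported_four_primes (p₁ p₂ p₃ p₄ : ℕ)
    (h1 : p₁.Prime) (h2 : p₂.Prime) (h3 : p₃.Prime) (h4 : p₄.Prime)
    (hgt : 40 < p₁) (h12 : p₁ < p₂) (h23 : p₂ < p₃) (h34 : p₃ < p₄)
    (hb12 : p₂ < 2 * p₁) (hb23 : p₃ < 2 * p₂) (hb34 : p₄ < 2 * p₃) :
    ∃ A : Finset (ZMod ((p₁ * p₂ * p₃ * p₄) ^ 4)),
      (∀ p α : ℕ, p.Prime → 1 ≤ α →
        (cyclotomic (p ^ α) ℤ ∣ zmaskPoly ((p₁ * p₂ * p₃ * p₄) ^ 4) A ↔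
          (p = p₁ ∨ p = p₂ ∨ p = p₃ ∨ p = p₄) ∧ (α = 2 ∨ α = 3 ∨ α = 4))) ∧
      A.card = (p₁ * p₂ * p₃ * p₄) ^ 3 ∧
      PropT1 ((p₁ * p₂ * p₃ * p₄) ^ 4) A ∧
      PropT2 ((p₁ * p₂ * p₃ * p₄) ^ 4) A ∧
      cyclotomic (p₁ * p₂ * p₃ * p₄) ℤ ∣ zmaskPoly ((p₁ * p₂ * p₃ * p₄) ^ 4) A := by
  have hsq : Squarefree (p₁ * p₂ * (p₃ * p₄)) := by
    simp only [Nat.squarefree_mul_iff, Nat.coprime_mul_iff_left, Nat.coprime_mul_iff_right,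
      Nat.coprime_primes, h1, h2, h3, h4, h1.prime.squarefree, h2.prime.squarefree,
      h3.prime.squarefree, h4.prime.squarefree, and_true]
    omega
  have hle : (p₁ - 1) * (p₂ - 1) ≤ (p₃ * p₄) ^ 3 :=
    (Nat.mul_le_mul (by omega) (by omega)).trans (Nat.le_self_pow three_ne_zero _)
  obtain ⟨u, v, huv⟩ := Nat.exists_add_mul_eq_of_gcd_dvd_of_mul_pred_le p₁ p₂ ((p₃ * p₄) ^ 3)
    (by simp [(Nat.coprime_primes h1 h2).mpr h12.ne]) hle
  have hmain := exists_T2_unsupported_four_primes_general h1.one_lt h2.one_lt hsq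
    (show p₁ * u + p₂ * v = (p₃ * p₄) ^ 3 by rw [← huv]; ring)
  have hdvd : ∀ p : ℕ, p.Prime →
      (p ∣ p₁ * p₂ * p₃ * p₄ ↔ p = p₁ ∨ p = p₂ ∨ p = p₃ ∨ p = p₄) := fun p hp => by
    simp only [hp.dvd_mul, Nat.prime_dvd_prime_iff_eq, hp, h1, h2, h3, h4, or_assoc]
  have hexp : ∀ α : ℕ, (2 ≤ α ∧ α ≤ 3 + 1) ↔ (α = 2 ∨ α = 3 ∨ α = 4) := by omega
  rw [← mul_assoc] at hmain
  obtain ⟨A, hA, hrest⟩ := hmain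
  exact ⟨A, fun p α hp hα => by rw [hA p α hp hα, hdvd p hp, hexp], hrest⟩
end
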